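/- arXiv:2408.03215 — 2 statements merged into one kernel-verified Lean document; each statement's English description precedes it below -/
import Mathlib

section
/- The coordinatewise stochastic binarization with step size α = ‖m‖_∞ satisfies the compression-variance bound (Assumption 5) with q² = d − 1: E‖S(m) − m‖₂² = d·‖m‖_∞² − ‖m‖₂² ≤ (d − 1)·‖m‖₂². -/
open MeasureTheory

lemma sb_one (α x : ℝ) (hα : 0 < α) (hx : |x| ≤ α) :
    Integrable (fun u : ℝ => (α * (2 * (⌊(α + x) / (2 * α) + u⌋ : ℝ) - 1) - x) ^ 2)
      (volume.restrict (Set.Ico (0 : ℝ) 1)) ∧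
    ∫ u in Set.Ico (0 : ℝ) 1, (α * (2 * (⌊(α + x) / (2 * α) + u⌋ : ℝ) - 1) - x) ^ 2
      = α ^ 2 - x ^ 2 := by
  obtain ⟨h1, h2⟩ := abs_le.mp hx
  obtain ⟨p, hp⟩ : ∃ p, p = (α + x) / (2 * α) := ⟨_, rfl⟩
  have hpx : p * (2 * α) = α + x := by rw [hp]; field_simp
  have hp0 : 0 ≤ p := by rw [hp]; apply div_nonneg <;> linarith
  have hp1 : p ≤ 1 := by rw [hp, div_le_one (by linarith)]; linarith
  rw [← hp]
  have heq : Set.EqOn (fun u : ℝ => (α * (2 * (⌊p + u⌋ : ℝ) - 1) - x) ^ 2)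
      (fun u => (α + x) ^ 2 + (Set.Ico (1 - p) 1).indicator (fun _ => -4 * α * x) u)
      (Set.Ico (0 : ℝ) 1) := by
    intro u hu
    obtain ⟨hu0, hu1⟩ := hu
    by_cases h : 1 - p ≤ u
    · have hf : ⌊p + u⌋ = 1 := by
        rw [Int.floor_eq_iff]; constructor <;> push_cast <;> linarith
      have hmem : u ∈ Set.Ico (1 - p) 1 := ⟨h, hu1⟩
      simp only [hf, Set.indicator_of_mem hmem]
      push_cast; ring
    · have hf : ⌊p + u⌋ = 0 := by
        rw [Int.floor_eq_iff]; constructor <;> push_cast <;> linarith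
      have hmem : u ∉ Set.Ico (1 - p) 1 := fun hh => h hh.1
      simp only [hf, Set.indicator_of_notMem hmem]
      push_cast; ring
  have hi1 : Integrable (fun _ : ℝ => (α + x) ^ 2) (volume.restrict (Set.Ico (0 : ℝ) 1)) :=
    integrable_const _
  have hi2 : Integrable ((Set.Ico (1 - p) 1).indicator (fun _ : ℝ => -4 * α * x))
      (volume.restrict (Set.Ico (0 : ℝ) 1)) :=
    (integrable_const _).indicator measurableSet_Ico
  refine ⟨(integrableOn_congr_fun heq measurableSet_Ico).mpr (hi1.add hi2), ?_⟩
  rw [setIntegral_congr_fun measurableSet_Ico heq, integral_add hi1 hi2,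
    integral_indicator measurableSet_Ico, Measure.restrict_restrict measurableSet_Ico,
    Set.inter_eq_left.mpr (Set.Ico_subset_Ico_left (by linarith))]
  simp only [integral_const, measureReal_restrict_apply_univ, Real.volume_real_Ico, smul_eq_mul]
  rw [max_eq_left (by linarith), max_eq_left (by linarith)]
  linear_combination (-2 * x) * hpx

/-- **Compression-variance bound for coordinatewise stochastic binarization** with step size
`α = ‖m‖_∞`: `E‖S(m) − m‖₂² = d ‖m‖_∞² − ‖m‖₂² ≤ (d − 1) ‖m‖₂²`, i.e. Assumption 5 holds
with `q² = d − 1`. -/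
theorem stochastic_binarization_assumption5
    {Ω : Type*} {m0 : MeasurableSpace Ω} (P : Measure Ω) [IsProbabilityMeasure P]
    (d : ℕ) (hd : 1 ≤ d)
    (m : EuclideanSpace ℝ (Fin d)) (hm : m ≠ 0)
    (α : ℝ) (hα : IsGreatest (Set.range fun i => |m i|) α)
    (ζ : Fin d → Ω → ℝ) (hζmeas : ∀ i, Measurable (ζ i))
    (hζ : ∀ i, Measure.map (ζ i) P = volume.restrict (Set.Ico (0 : ℝ) 1)) :
    (∫ ω, ‖((EuclideanSpace.equiv (Fin d) ℝ).symm fun i =>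
        α * (2 * (⌊(α + m i) / (2 * α) + ζ i ω⌋ : ℝ) - 1)) - m‖ ^ 2 ∂P =
      d * α ^ 2 - ‖m‖ ^ 2) ∧
    ∫ ω, ‖((EuclideanSpace.equiv (Fin d) ℝ).symm fun i =>
        α * (2 * (⌊(α + m i) / (2 * α) + ζ i ω⌋ : ℝ) - 1)) - m‖ ^ 2 ∂P ≤
      ((d : ℝ) - 1) * ‖m‖ ^ 2 := by
  have hle : ∀ i, |m i| ≤ α := fun i => hα.2 ⟨i, rfl⟩
  obtain ⟨j, hj⟩ := hα.1
  have hj' : |m j| = α := hj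
  have hpos : 0 < α := by
    rcases (hj' ▸ abs_nonneg (m j) : 0 ≤ α).lt_or_eq with h | h
    · exact h
    · exfalso; apply hm; ext i
      have := hle i
      rw [← h] at this
      simpa using this
  have hn : ‖m‖ ^ 2 = ∑ i, (m i) ^ 2 := by
    rw [EuclideanSpace.real_norm_sq_eq]
  have hone : ∀ i, Integrable (fun ω => (α * (2 * (⌊(α + m i) / (2 * α) + ζ i ω⌋ : ℝ) - 1)
      - m i) ^ 2) P ∧ ∫ ω, (α * (2 * (⌊(α + m i) / (2 * α) + ζ i ω⌋ : ℝ) - 1) - m i) ^ 2 ∂P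
      = α ^ 2 - (m i) ^ 2 := by
    intro i
    obtain ⟨ha, hb⟩ := sb_one α (m i) hpos (hle i)
    rw [← hζ i] at ha hb
    exact ⟨ha.comp_measurable (hζmeas i), by
      rw [← hb, integral_map (hζmeas i).aemeasurable ha.aestronglyMeasurable]⟩
  have key : ∫ ω, ‖((EuclideanSpace.equiv (Fin d) ℝ).symm fun i =>
        α * (2 * (⌊(α + m i) / (2 * α) + ζ i ω⌋ : ℝ) - 1)) - m‖ ^ 2 ∂P =
      d * α ^ 2 - ‖m‖ ^ 2 := by
    simp only [EuclideanSpace.real_norm_sq_eq]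
    have : ∀ ω, ∑ i, (((EuclideanSpace.equiv (Fin d) ℝ).symm (fun i =>
        α * (2 * (⌊(α + m i) / (2 * α) + ζ i ω⌋ : ℝ) - 1)) - m) i) ^ 2 =
        ∑ i, (α * (2 * (⌊(α + m i) / (2 * α) + ζ i ω⌋ : ℝ) - 1) - m i) ^ 2 := fun ω => rfl
    simp only [this]
    rw [integral_finsetSum _ (fun i _ => (hone i).1),
      Finset.sum_congr rfl (fun i _ => (hone i).2)]
    simp
  refine ⟨key, ?_⟩
  rw [key]
  have hs : α ^ 2 ≤ ‖m‖ ^ 2 := by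
    rw [hn, ← hj', sq_abs]
    exact Finset.single_le_sum (f := fun i => (m i) ^ 2) (fun i _ => sq_nonneg _)
      (Finset.mem_univ j)
  have : (d : ℝ) * α ^ 2 ≤ d * ‖m‖ ^ 2 := by gcongr
  linarith
end

section
/- Diminishing-stepsize recursion lemma: if a nonnegative sequence (Δ_t)_{t ≥ 1} satisfies Δ_{t+1} ≤ (1 − η_t μ)·Δ_t + η_t²·B for all t ≥ 1 with η_t = β/(t + γ), then for all t ≥ 1, Δ_t ≤ v/(t + γ), where v = max{β²B/(βμ − 1), (γ + 1)·Δ_1}. -/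
/-- **Diminishing-stepsize recursion lemma**: if a nonnegative sequence `Δ` satisfies
`Δ (t+1) ≤ (1 − η t μ) Δ t + (η t)² B` for all `t ≥ 1`, where `η t = β / (t + γ)` with
`β > 1/μ`, `γ > 0` and `β μ ≤ 1 + γ`, then `Δ t ≤ v / (t + γ)` for all `t ≥ 1`, where
`v = max (β² B / (β μ − 1)) ((γ + 1) Δ 1)`. -/
theorem diminishing_stepsize_recursion
    (μ B γ β : ℝ) (hμ : 0 < μ) (hB : 0 ≤ B) (hγ : 0 < γ)
    (hβ : 1 / μ < β) (hβμ : β * μ ≤ 1 + γ)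
    (Δ : ℕ → ℝ) (hΔ : ∀ t, 1 ≤ t → 0 ≤ Δ t)
    (hrec : ∀ t : ℕ, 1 ≤ t →
      Δ (t + 1) ≤ (1 - (β / ((t : ℝ) + γ)) * μ) * Δ t + (β / ((t : ℝ) + γ)) ^ 2 * B) :
    ∀ t : ℕ, 1 ≤ t →
      Δ t ≤ max (β ^ 2 * B / (β * μ - 1)) ((γ + 1) * Δ 1) / ((t : ℝ) + γ) := by
  have h1 : 0 < β * μ - 1 := by
    have := (div_lt_iff₀ hμ).1 hβ
    linarith
  obtain ⟨v, hv⟩ : ∃ v, v = max (β ^ 2 * B / (β * μ - 1)) ((γ + 1) * Δ 1) := ⟨_, rfl⟩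
  rw [← hv]
  have hv1 : β ^ 2 * B ≤ v * (β * μ - 1) := by
    rw [← div_le_iff₀ h1, hv]
    exact le_max_left _ _
  have hv2 : (γ + 1) * Δ 1 ≤ v := by
    rw [hv]
    exact le_max_right _ _
  have hv0 : 0 ≤ v := le_trans (mul_nonneg (by linarith) (hΔ 1 le_rfl)) hv2
  intro t ht
  induction t, ht using Nat.le_induction with
  | base =>
    rw [le_div_iff₀ (by push_cast; linarith)]
    push_cast
    linarith
  | succ t ht ih =>
    have h := hrec t ht
    have ht' : (1 : ℝ) ≤ t := by exact_mod_cast ht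
    obtain ⟨s, hs⟩ : ∃ s : ℝ, s = (t : ℝ) + γ := ⟨_, rfl⟩
    have e : ((t + 1 : ℕ) : ℝ) + γ = s + 1 := by
      push_cast
      linarith
    rw [e]
    rw [← hs] at h ih
    have hs0 : 0 < s := by linarith
    have hc : 0 ≤ 1 - β / s * μ := by
      have : β / s * μ ≤ 1 := by
        rw [div_mul_eq_mul_div, div_le_one hs0]
        linarith
      linarith
    have h2 := mul_le_mul_of_nonneg_left ih hc
    have h3 : (β / s) ^ 2 * B ≤ v * (β * μ - 1) / s ^ 2 := by
      rw [div_pow, div_mul_eq_mul_div]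
      gcongr
    have h4 : (1 - β / s * μ) * (v / s) + v * (β * μ - 1) / s ^ 2 = v * (s - 1) / s ^ 2 := by
      field_simp
      ring
    have h5 : v * (s - 1) / s ^ 2 ≤ v / (s + 1) := by
      rw [div_le_div_iff₀ (by positivity) (by positivity)]
      nlinarith
    linarith
end
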